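/- arXiv:2512.04622 — 3 statements merged into one kernel-verified Lean document; each statement's English description precedes it below -/
import Mathlib

section
/- Fix a horizon T : ℕ, a state type S, a nonempty control type U, and for each stage t : Fin T a nonempty finite noise type Ξ with probability weights q t : Ξ → ℝ≥0∞ satisfying ∑_{ξ} q t ξ = 1, the stages being independent (a noise scenario ξ : Fin T → Ξ has weight ∏_{t} q t (ξ t)). Let f : Fin T → S → Ξ → U → S be the dynamics, c : Fin T → S → Ξ → U → ℝ≥0∞ the stage costs, and K : S → ℝ≥0∞ the terminal cost. A hazard-decision policy π assigns to each stage t a control π t (ξ 0, …, ξ t) ∈ U depending on the noise history up to and including stage t. Given a scenario ξ and initial state s, the trajectory is x 0 = s, x (t+1) = f t (x t) (ξ t) (π t (ξ 0, …, ξ t)), with total cost (∑_{t} c t (x t) (ξ t) (π t (ξ 0, …, ξ t))) + K (x T); the expected cost of π is the sum over all scenarios of the scenario weight times the total cost. Define V T = K and V t s = ∑_{ξ} q t ξ * ⨅_{a : U} (c t s ξ a + V (t+1) (f t s ξ a)). Then for every initial state s, V 0 s equals the infimum of the expected cost over all hazard-decision policies π. -/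
/-!
Dynamic programming for hazard-decision policies, by induction on the horizon, splitting off the
*first* stage.

A nonanticipative policy over `T + 1` stages is the same thing as a choice, for each value `x` of
the first noise, of a first control together with a nonanticipative policy for the remaining `T`
stages (`gluePolicy`, `gluePolicy_surjective`). Since the weights are products and those of the
tail sum to one, the expected cost of such a glued policy is
`∑ x, q 0 x * (first cost + expected cost of the tail policy chosen after x)`
(`expectedCost_glue`). Each summand depends on the choice at `x` only, so the infimum over all
choices passes inside the finite sum (`iInf_pi_sum`); no attainment of the infima is required. The
induction hypothesis identifies the infimum over tail policies with the value function at stage 1.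
-/

open scoped ENNReal

/-- The trajectory generated from initial state `s` by controls `u` under the
noise scenario `ξ` through the dynamics `f`. -/
def straj {T : ℕ} {S Ξ U : Type*} (f : Fin T → S → Ξ → U → S) (s : S)
    (ξ : Fin T → Ξ) (u : Fin T → U) : ℕ → S
  | 0 => s
  | Nat.succ t =>
    if h : t < T then f ⟨t, h⟩ (straj f s ξ u t) (ξ ⟨t, h⟩) (u ⟨t, h⟩)
    else straj f s ξ u t

/-- Nonanticipative hazard-decision policies: the control at stage `t` depends only on the noises
of the stages `≤ t`. -/
abbrev HDPolicy (T : ℕ) (Ξ U : Type*) : Type _ :=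
  {π : Fin T → (Fin T → Ξ) → U //
    ∀ (t : Fin T) (ξ ξ' : Fin T → Ξ), (∀ i ≤ t, ξ i = ξ' i) → π t ξ = π t ξ'}

/-- Expected total cost of the policy `π` from the initial state `s`, the scenario `ξ` having weight
`∏ t, q t (ξ t)`. -/
noncomputable def expectedCost {T : ℕ} {S U Ξ : Type*} [Fintype Ξ] (q : Fin T → Ξ → ℝ≥0∞)
    (f : Fin T → S → Ξ → U → S) (c : Fin T → S → Ξ → U → ℝ≥0∞) (K : S → ℝ≥0∞) (s : S)
    (π : HDPolicy T Ξ U) : ℝ≥0∞ :=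
  ∑ ξ : Fin T → Ξ, (∏ t, q t (ξ t)) *
    ((∑ t : Fin T, c t (straj f s ξ (fun t' => π.val t' ξ) t) (ξ t) (π.val t ξ))
      + K (straj f s ξ (fun t' => π.val t' ξ) T))

/-- After its first step, the trajectory is that of the time-shifted system started at the state
reached. -/
theorem straj_cons_succ {T : ℕ} {S Ξ U : Type*} (f : Fin (T + 1) → S → Ξ → U → S) (s : S) (x : Ξ)
    (ξ : Fin T → Ξ) (u : Fin (T + 1) → U) (n : ℕ) :
    straj f s (Fin.cons x ξ : Fin (T + 1) → Ξ) u (n + 1) =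
      straj (fun t => f t.succ) (f 0 s x (u 0)) ξ (fun t => u t.succ) n := by
  induction n with
  | zero => simp [straj]
  | succ n ih =>
    rw [straj, ih]
    conv_rhs => rw [straj]
    by_cases h : n < T
    · have h' : n + 1 < T + 1 := by omega
      rw [dif_pos h, dif_pos h']
      rfl
    · have h' : ¬ n + 1 < T + 1 := by omega
      rw [dif_neg h, dif_neg h']

/-- The policy that, after observing the first noise `x`, plays the control `(φ x).1` and then
follows the policy `(φ x).2` on the remaining noises. -/
def gluePolicy {T : ℕ} {Ξ U : Type*} (φ : Ξ → U × HDPolicy T Ξ U) : HDPolicy (T + 1) Ξ U :=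
  ⟨fun t ξ => Fin.cases (φ (ξ 0)).1 (fun t' => (φ (ξ 0)).2.val t' (Fin.tail ξ)) t, by
    intro t ξ ξ' h
    have h0 : ξ 0 = ξ' 0 := h 0 (Fin.zero_le t)
    induction t using Fin.cases with
    | zero => simp only [Fin.cases_zero, h0]
    | succ t =>
      simp only [Fin.cases_succ, h0]
      exact (φ (ξ' 0)).2.property t _ _ fun i hi => h i.succ (Fin.succ_le_succ_iff.mpr hi)⟩

theorem gluePolicy_surjective {T : ℕ} {Ξ U : Type*} [Nonempty Ξ] :
    Function.Surjective (gluePolicy : (Ξ → U × HDPolicy T Ξ U) → HDPolicy (T + 1) Ξ U) := by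
  intro π
  obtain ⟨x₀⟩ := ‹Nonempty Ξ›
  -- The first control ignores the later noises, so these may be filled in with any constant.
  refine ⟨fun x => (π.val 0 (Fin.cons x fun _ => x₀),
    ⟨fun t ξ => π.val t.succ (Fin.cons x ξ), fun t ξ ξ' h => ?_⟩), ?_⟩
  · refine π.property _ _ _ fun i hi => ?_
    induction i using Fin.cases with
    | zero => rfl
    | succ i => simpa using h i (Fin.succ_le_succ_iff.mp hi)
  · apply Subtype.ext
    funext t ξ
    induction t using Fin.cases with
    | zero =>
      refine π.property _ _ _ fun i hi => ?_
      obtain rfl : i = 0 := Fin.le_zero_iff.mp hi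
      rfl
    | succ t => exact congrArg (π.val t.succ) (Fin.cons_self_tail ξ)

/-- One-stage decomposition of the expected cost. The weights of the tail scenarios sum to one, so
the first stage cost comes out of the tail expectation. -/
theorem expectedCost_glue {T : ℕ} {S U Ξ : Type*} [Fintype Ξ] (q : Fin (T + 1) → Ξ → ℝ≥0∞)
    (hq : ∀ t, ∑ ξ, q t ξ = 1) (f : Fin (T + 1) → S → Ξ → U → S)
    (c : Fin (T + 1) → S → Ξ → U → ℝ≥0∞) (K : S → ℝ≥0∞) (s : S)
    (φ : Ξ → U × HDPolicy T Ξ U) :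
    expectedCost q f c K s (gluePolicy φ) =
      ∑ x, q 0 x * (c 0 s x (φ x).1 +
        expectedCost (fun t => q t.succ) (fun t => f t.succ) (fun t => c t.succ) K
          (f 0 s x (φ x).1) (φ x).2) := by
  have hone : ∑ ξ : Fin T → Ξ, ∏ t, q t.succ (ξ t) = 1 := by
    rw [← Fintype.prod_sum]
    simp [hq]
  unfold expectedCost
  rw [← (Fin.consEquiv fun _ : Fin (T + 1) => Ξ).sum_comp, Fintype.sum_prod_type]
  refine Finset.sum_congr rfl fun x _ => ?_
  conv_rhs => rw [← one_mul (c 0 s x (φ x).1), ← hone, Finset.sum_mul, ← Finset.sum_add_distrib,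
    Finset.mul_sum]
  refine Finset.sum_congr rfl fun ξ _ => ?_
  rw [← mul_add, ← mul_assoc, ← add_assoc]
  have hcons : (Fin.consEquiv fun _ : Fin (T + 1) => Ξ) (x, ξ) = Fin.cons x ξ := rfl
  rw [hcons]
  rw [Fin.prod_univ_succ, Fin.sum_univ_succ]
  simp only [Fin.val_succ, straj_cons_succ, Fin.cons_zero, Fin.cons_succ]
  rfl

/-- A finite sum of terms depending on separate coordinates is minimised coordinatewise. -/
theorem iInf_pi_sum {Ξ A : Type*} [Fintype Ξ] [Nonempty A] (h : Ξ → A → ℝ≥0∞) :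
    ⨅ φ : Ξ → A, ∑ x, h x (φ x) = ∑ x, ⨅ a, h x a := by
  classical
  rw [ENNReal.iInf_sum]
  · refine Finset.sum_congr rfl fun x _ => ?_
    exact Function.Surjective.iInf_comp (f := fun φ : Ξ → A => φ x)
      (fun a => ⟨fun _ => a, rfl⟩) (h x)
  · -- The family is downward directed: pick the better of the two choices at each coordinate.
    intro t i j
    refine ⟨fun x => if h x (i x) ≤ h x (j x) then i x else j x, fun x _ => ?_⟩
    dsimp only
    split_ifs with hx
    · exact ⟨le_rfl, hx⟩
    · exact ⟨(not_le.mp hx).le, le_rfl⟩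

/-- Stochastic finite-horizon Bellman principle under the hazard-decision
information structure with stagewise-independent finitely supported noise:
the backward recursion `V T = K`,
`V t s = ∑ ξ, q t ξ * ⨅ a, (c t s ξ a + V (t+1) (f t s ξ a))`
computes the optimal value over all nonanticipative hazard-decision policies,
i.e. policies `π` where `π t` depends only on the noise history `(ξ 0, …, ξ t)`
up to and including stage `t`. A scenario `ξ : Fin T → Ξ` has weight
`∏ t, q t (ξ t)` (stagewise independence). -/
theorem bellman_principle_hazard_decision
    {T : ℕ} {S U Ξ : Type*} [Nonempty U] [Fintype Ξ] [Nonempty Ξ]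
    (q : Fin T → Ξ → ℝ≥0∞) (hq : ∀ t, ∑ ξ, q t ξ = 1)
    (f : Fin T → S → Ξ → U → S) (c : Fin T → S → Ξ → U → ℝ≥0∞) (K : S → ℝ≥0∞)
    (V : Fin (T + 1) → S → ℝ≥0∞)
    (hVT : ∀ s, V (Fin.last T) s = K s)
    (hV : ∀ (t : Fin T) (s : S),
      V t.castSucc s = ∑ ξ : Ξ, q t ξ * ⨅ a : U, (c t s ξ a + V t.succ (f t s ξ a))) :
    ∀ s : S, V 0 s =
      ⨅ π : {π : Fin T → (Fin T → Ξ) → U //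
          ∀ (t : Fin T) (ξ ξ' : Fin T → Ξ), (∀ i ≤ t, ξ i = ξ' i) → π t ξ = π t ξ'},
        ∑ ξ : Fin T → Ξ, (∏ t, q t (ξ t)) *
          ((∑ t : Fin T,
              c t (straj f s ξ (fun t' => π.val t' ξ) t) (ξ t) (π.val t ξ))
            + K (straj f s ξ (fun t' => π.val t' ξ) T)) := by
  change ∀ s : S, V 0 s = ⨅ π : HDPolicy T Ξ U, expectedCost q f c K s π
  induction T with
  | zero =>
    intro s
    have : Nonempty (HDPolicy 0 Ξ U) := ⟨⟨fun t => t.elim0, fun t => t.elim0⟩⟩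
    simpa [expectedCost, straj] using hVT s
  | succ T ih =>
    intro s
    have ih' := ih (fun t => q t.succ) (fun t => hq t.succ) (fun t => f t.succ)
      (fun t => c t.succ) (fun t => V t.succ) hVT (fun t s => hV t.succ s)
    have : Nonempty (HDPolicy T Ξ U) :=
      ⟨⟨fun _ _ => Classical.arbitrary U, fun _ _ _ _ => rfl⟩⟩
    -- Finite weights are needed to move the factor `q 0 x` inside the infimum.
    have hfin : ∀ x, q 0 x ≠ ∞ := fun x =>
      ne_top_of_le_ne_top ENNReal.one_ne_top
        (hq 0 ▸ Finset.single_le_sum (f := q 0) (fun _ _ => zero_le) (Finset.mem_univ x))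
    rw [← gluePolicy_surjective.iInf_comp]
    simp only [expectedCost_glue q hq]
    rw [iInf_pi_sum fun x (p : U × HDPolicy T Ξ U) => q 0 x * (c 0 s x p.1 +
      expectedCost (fun t => q t.succ) (fun t => f t.succ) (fun t => c t.succ) K
        (f 0 s x p.1) p.2)]
    refine (hV 0 s).trans (Finset.sum_congr rfl fun x _ => ?_)
    rw [← ENNReal.mul_iInf fun hx => absurd hx (hfin x), iInf_prod]
    congr 1
    refine iInf_congr fun a => ?_
    dsimp only
    rw [← ENNReal.add_iInf]
    exact congrArg (c 0 s x a + ·) (ih' (f 0 s x a))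
end

section
/- Consider the following finite multinode multistage setting. Let N (nodes), A (arcs) and H (hours) be nonempty finite types, M : Matrix N A ℝ a node-arc incidence matrix acting hour-wise on arc flows (so (M r) i h = ∑_{a} M i a * r a h for r : A → H → ℝ), T : ℕ the horizon, and for each stage t : Fin T a nonempty finite noise type Ξ with nonnegative real weights q t summing to 1. For each node i ∈ N let S i be its state type, U i a nonempty control type, f t i : S i → Ξ → U i → S i its dynamics, c t i : S i → Ξ → U i → ℝ its nonnegative stage cost, b t i : Ξ → U i → (H → ℝ) its nodal balance map taking values in a fixed bounded subset of H → ℝ, and K i : S i → ℝ its nonnegative terminal cost; let B ⊆ (A → H → ℝ) be a nonempty bounded set of admissible arc flows and τ t : (A → H → ℝ) → ℝ nonnegative transport costs. Fix a deterministic price process p : Fin T → N → H → ℝ. Define: (i) the dualized global recursion W T s = ∑_i K i (s i) and W t s = ∑_{ξ} q t ξ * ⨅_{(u, r) : (Π i, U i) × B} [∑_{i} (c t i (s i) ξ (u i) + ∑_{h} p t i h * b t i ξ (u i) h) + τ t r − ∑_{i,h} p t i h * (M r) i h + W (t+1) (fun i ↦ f t i (s i) ξ (u i))]; (ii) the nodal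 price recursions V^i T = K i and V^i t (s_i) = ∑_{ξ} q t ξ * ⨅_{a : U i} [c t i s_i ξ a + ∑_{h} p t i h * b t i ξ a h + V^i (t+1) (f t i s_i ξ a)]; (iii) the transport price values V^A T = 0 and V^A t = ⨅_{r ∈ B} [τ t r − ∑_{i,h} p t i h * (M r) i h] + V^A (t+1). Then for every stage t and every state s : Π i, S i, W t s = ∑_{i} V^i t (s i) + V^A t. -/
/-!
Backward induction on the stage. If `W (t+1)` splits as a sum of nodal terms plus a constant, then
for each noise value the objective minimised in `W t` is a sum of one function of each nodal
control, one function of the flow, and a constant. The infimum of such a separable function over a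
product is the sum of the infima (`iInf_separable`), and averaging with the weights `q t`, which
sum to one, leaves the flow term and the constant unchanged.

The splitting of the infimum over `ℝ` needs every summand to be bounded below. For the flow term
this follows from the boundedness of `B`; for the nodal terms the induction also carries a lower
bound, uniform in the state, of each `V i t`.
-/

/-- The infimum of an additively separable function over a product is the sum of the infima,
provided each summand is bounded below. -/
lemma iInf_separable {N : Type*} [Fintype N] {U : N → Type*} [∀ i, Nonempty (U i)]
    {R : Type*} [Nonempty R] (g : ∀ i, U i → ℝ) (φ : R → ℝ) (k : ℝ)
    (hg : ∀ i, BddBelow (Set.range (g i))) (hφ : BddBelow (Set.range φ)) :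
    (⨅ ur : (∀ i, U i) × R, ((∑ i, g i (ur.1 i)) + φ ur.2 + k))
      = (∑ i, ⨅ a, g i a) + (⨅ r, φ r) + k := by
  have hlow : ∀ ur : (∀ i, U i) × R,
      (∑ i, ⨅ a, g i a) + (⨅ r, φ r) + k ≤ (∑ i, g i (ur.1 i)) + φ ur.2 + k := fun ur => by
    have h1 : (∑ i, ⨅ a, g i a) ≤ ∑ i, g i (ur.1 i) :=
      Finset.sum_le_sum fun i _ => ciInf_le (hg i) (ur.1 i)
    have h2 := ciInf_le hφ ur.2
    linarith
  refine le_antisymm (le_of_forall_pos_le_add fun ε hε => ?_) (le_ciInf hlow)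
  -- The tolerance `ε` is shared equally among the nodes and the factor `R`.
  have hn : (0 : ℝ) < (Fintype.card N : ℝ) + 1 := by positivity
  set δ : ℝ := ε / ((Fintype.card N : ℝ) + 1) with hδ
  have hδ0 : 0 < δ := div_pos hε hn
  have hδε : (Fintype.card N : ℝ) * δ + δ = ε := by rw [hδ]; field_simp
  choose u hu using fun i => exists_lt_of_ciInf_lt (lt_add_of_pos_right (⨅ a, g i a) hδ0)
  obtain ⟨r, hr⟩ := exists_lt_of_ciInf_lt (lt_add_of_pos_right (⨅ r, φ r) hδ0)
  have h1 : ∑ i, g i (u i) ≤ ∑ i, ((⨅ a, g i a) + δ) :=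
    Finset.sum_le_sum fun i _ => (hu i).le
  have h2 : ∑ i, ((⨅ a, g i a) + δ) = (∑ i, ⨅ a, g i a) + (Fintype.card N : ℝ) * δ := by
    simp [Finset.sum_add_distrib]
  have h3 := ciInf_le (f := fun ur : (∀ i, U i) × R => (∑ i, g i (ur.1 i)) + φ ur.2 + k)
    ⟨_, Set.forall_mem_range.2 hlow⟩ (u, r)
  dsimp only at h3
  linarith

lemma abs_sum_mul_le {ι : Type*} [Fintype ι] (w x : ι → ℝ) (C : ℝ) (hx : ∀ j, |x j| ≤ C) :
    |∑ j, w j * x j| ≤ ∑ j, |w j| * C :=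
  (Finset.abs_sum_le_sum_abs _ _).trans <| Finset.sum_le_sum fun j _ => by
    rw [abs_mul]
    exact mul_le_mul_of_nonneg_left (hx j) (abs_nonneg _)

/-- Exact decomposition of the dualized global cost-to-go recursion: after
dualizing the hourly spatial coupling constraint with a deterministic price
process `p`, the dualized global cost-to-go functions `W` decompose exactly as
the sum of the nodal price cost-to-go functions `V i` plus the
(state-independent) transport price cost-to-go values `VA`. Here the node-arc
incidence matrix `M` acts hour-wise on arc flows: `(M r) i h = ∑ a, M i a * r a h`. -/
theorem dualized_costToGo_decomposition
    {N A H : Type*} [Fintype N] [Nonempty N] [Fintype A] [Nonempty A]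
    [Fintype H] [Nonempty H]
    (M : Matrix N A ℝ)
    {T : ℕ} {Ξ : Type*} [Fintype Ξ] [Nonempty Ξ]
    (q : Fin T → Ξ → ℝ) (hq0 : ∀ t ξ, 0 ≤ q t ξ) (hq1 : ∀ t, ∑ ξ, q t ξ = 1)
    {S : N → Type*} {U : N → Type*} [∀ i, Nonempty (U i)]
    (f : ∀ t : Fin T, ∀ i : N, S i → Ξ → U i → S i)
    (c : ∀ t : Fin T, ∀ i : N, S i → Ξ → U i → ℝ)
    (hc : ∀ t i si ξ u, 0 ≤ c t i si ξ u)
    (b : ∀ t : Fin T, ∀ i : N, Ξ → U i → H → ℝ)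
    (hb : ∃ C : ℝ, ∀ t i ξ u h, |b t i ξ u h| ≤ C)
    (K : ∀ i : N, S i → ℝ) (hK : ∀ i si, 0 ≤ K i si)
    (B : Set (A → H → ℝ)) (hBne : B.Nonempty)
    (hBbd : ∃ C : ℝ, ∀ r ∈ B, ∀ a h, |r a h| ≤ C)
    (τ : Fin T → (A → H → ℝ) → ℝ) (hτ : ∀ t r, 0 ≤ τ t r)
    (p : Fin T → N → H → ℝ)
    -- (i) the dualized global recursion
    (W : Fin (T + 1) → (∀ i, S i) → ℝ)
    (hWT : ∀ s, W (Fin.last T) s = ∑ i, K i (s i))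
    (hW : ∀ (t : Fin T) (s : ∀ i, S i),
      W t.castSucc s = ∑ ξ : Ξ, q t ξ *
        (⨅ ur : (∀ i, U i) × ↥B,
          ((∑ i, (c t i (s i) ξ (ur.1 i) + ∑ h, p t i h * b t i ξ (ur.1 i) h))
            + τ t ur.2.val
            - (∑ i, ∑ h, p t i h * ∑ a, M i a * ur.2.val a h)
            + W t.succ (fun i => f t i (s i) ξ (ur.1 i)))))
    -- (ii) the nodal price recursions
    (V : ∀ i : N, Fin (T + 1) → S i → ℝ)
    (hVT : ∀ i si, V i (Fin.last T) si = K i si)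
    (hV : ∀ (i : N) (t : Fin T) (si : S i),
      V i t.castSucc si = ∑ ξ : Ξ, q t ξ *
        (⨅ a : U i, (c t i si ξ a + (∑ h, p t i h * b t i ξ a h)
          + V i t.succ (f t i si ξ a))))
    -- (iii) the transport price values
    (VA : Fin (T + 1) → ℝ)
    (hVAT : VA (Fin.last T) = 0)
    (hVA : ∀ t : Fin T,
      VA t.castSucc =
        (⨅ r : ↥B, (τ t r.val - ∑ i, ∑ h, p t i h * ∑ a, M i a * r.val a h))
          + VA t.succ) :
    ∀ (t : Fin (T + 1)) (s : ∀ i, S i), W t s = (∑ i, V i t (s i)) + VA t := by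
  obtain ⟨Cb, hCb⟩ := hb
  obtain ⟨CB, hCB⟩ := hBbd
  have : Nonempty ↥B := hBne.to_subtype
  -- A state-uniform lower bound of the nodal stage objective, given one of `V i t.succ`.
  have hnode : ∀ (t : Fin T) (i : N) (L : ℝ), (∀ si, L ≤ V i t.succ si) → ∀ si ξ a,
      L - ∑ h, |p t i h| * Cb ≤
        c t i si ξ a + (∑ h, p t i h * b t i ξ a h) + V i t.succ (f t i si ξ a) := by
    intro t i L hL si ξ a
    have h1 := neg_le_of_abs_le (abs_sum_mul_le (p t i) (b t i ξ a) Cb (hCb t i ξ a))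
    have h2 := hc t i si ξ a
    have h3 := hL (f t i si ξ a)
    linarith
  have hflow : ∀ t : Fin T, BddBelow (Set.range fun r : ↥B =>
      τ t r.val - ∑ i, ∑ h, p t i h * ∑ a, M i a * r.val a h) := by
    intro t
    refine ⟨-∑ i, ∑ h, |p t i h| * ∑ a, |M i a| * CB, ?_⟩
    rintro _ ⟨r, rfl⟩
    have h1 : ∑ i, ∑ h, p t i h * ∑ a, M i a * r.val a h
        ≤ ∑ i, ∑ h, |p t i h| * ∑ a, |M i a| * CB :=
      Finset.sum_le_sum fun i _ => (le_abs_self _).trans <|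
        abs_sum_mul_le (p t i) _ _ fun h =>
          abs_sum_mul_le (M i) (fun a => r.val a h) CB fun a => hCB r.val r.2 a h
    have h2 := hτ t r.val
    dsimp only
    linarith
  suffices hmain : ∀ t : Fin (T + 1), (∀ i, ∃ L : ℝ, ∀ si, L ≤ V i t si) ∧
      ∀ s : ∀ i, S i, W t s = (∑ i, V i t (s i)) + VA t from fun t => (hmain t).2
  intro t
  induction t using Fin.reverseInduction with
  | last =>
    refine ⟨fun i => ⟨0, fun si => ?_⟩, fun s => ?_⟩
    · rw [hVT]; exact hK i si
    · simp only [hWT, hVT, hVAT, add_zero]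
  | cast t ih =>
    obtain ⟨hbd, hdec⟩ := ih
    choose L hL using hbd
    refine ⟨fun i => ⟨L i - ∑ h, |p t i h| * Cb, fun si => ?_⟩, fun s => ?_⟩
    · rw [hV]
      calc L i - ∑ h, |p t i h| * Cb
          = ∑ ξ, q t ξ * (L i - ∑ h, |p t i h| * Cb) := by
            rw [← Finset.sum_mul (s := Finset.univ) (f := q t), hq1, one_mul]
        _ ≤ _ := Finset.sum_le_sum fun ξ _ => mul_le_mul_of_nonneg_left
            (le_ciInf fun a => hnode t i (L i) (hL i) si ξ a) (hq0 t ξ)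
    · have hinf : ∀ ξ : Ξ, (⨅ ur : (∀ i, U i) × ↥B,
          ((∑ i, (c t i (s i) ξ (ur.1 i) + ∑ h, p t i h * b t i ξ (ur.1 i) h))
            + τ t ur.2.val
            - (∑ i, ∑ h, p t i h * ∑ a, M i a * ur.2.val a h)
            + W t.succ (fun i => f t i (s i) ξ (ur.1 i))))
          = (∑ i, ⨅ a : U i, (c t i (s i) ξ a + (∑ h, p t i h * b t i ξ a h)
              + V i t.succ (f t i (s i) ξ a))) + VA t.castSucc := by
        intro ξ
        rw [hVA, ← add_assoc, ← iInf_separable _ _ _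
          (fun i => ⟨_, Set.forall_mem_range.2 fun a => hnode t i (L i) (hL i) (s i) ξ a⟩)
          (hflow t)]
        refine iInf_congr fun ur => ?_
        rw [hdec, Finset.sum_add_distrib (g := fun i => V i t.succ (f t i (s i) ξ (ur.1 i)))]
        ring
      rw [hW, Finset.sum_congr rfl fun ξ _ => congrArg (q t ξ * ·) (hinf ξ)]
      simp_rw [hV, mul_add]
      rw [Finset.sum_add_distrib, ← Finset.sum_mul, hq1, one_mul, Finset.sum_comm]
      simp_rw [Finset.mul_sum]
end

section
/- In the finite multinode multistage setting (nodes N, arcs A, hours H, incidence matrix M, horizon T, stagewise-independent finite noise with weights q t, nodal states S i, nonempty controls U i, dynamics f t i, nonnegative costs c t i, bounded balance maps b t i, nonnegative terminal costs K i, nonempty bounded arc-flow set B, nonnegative transport costs τ t), let V denote the constrained global cost-to-go recursion (with the hourly coupling constraint b t i ξ (u i) = (M r) i for all i imposed inside each stage's infimum), and, for a deterministic price process p : Fin T → N → H → ℝ, let V^i denote the nodal price cost-to-go recursions (stage cost c t i plus the price term ∑_h p t i h * b t i ξ a h) and V^A the transport price cost-to-go values (V^A T = 0, V^A t = ⨅_{r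 ∈ B} [τ t r − ∑_{i,h} p t i h * (M r) i h] + V^A (t+1)). Then for every deterministic price process p, every stage t, and every state s : Π i, S i, ∑_{i} V^i t (s i) + V^A t ≤ V t s. -/
/-!
The proof is backward induction on the stage. At a stage `t` and a feasible pair `(u, r)`, the
coupling constraint makes the nodal price terms `∑ i h, p t i h * b t i ξ (u i) h` cancel the
transport price term, so the sum of the nodal objectives at `u i` and of the transport objective
at `r` is the global objective with `V t.succ` replaced by the sum of the price values, which is a
lower bound by induction. Each price infimum lies below its objective, and averaging over the
noise gives the claim.

The last step needs the real-valued infima to be genuine, that is, taken over families bounded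
below. For the transport problem this follows from boundedness of the flow set; for the nodal
problems it follows from `nodal_values_bddBelow`, a uniform lower bound on the nodal values that
is itself obtained by backward induction. Infeasible noise outcomes contribute `+∞` (or `0`, when
their weight vanishes) to the global value and are harmless.
-/

open Finset

/-- A price term against a bounded quantity is bounded below. -/
lemma neg_sum_abs_mul_le {H : Type*} [Fintype H] (p x : H → ℝ) (C : ℝ) (hx : ∀ h, |x h| ≤ C) :
    -(∑ h, |p h| * C) ≤ ∑ h, p h * x h := by
  rw [← sum_neg_distrib]
  refine sum_le_sum fun h _ => ?_
  have h1 : |p h * x h| ≤ |p h| * C := by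
    rw [abs_mul]
    exact mul_le_mul_of_nonneg_left (hx h) (abs_nonneg _)
  linarith [neg_abs_le (p h * x h)]

/-- At a single node, the price cost-to-go values are bounded below uniformly in the state. -/
lemma nodal_values_bddBelow {H Ξ S U : Type*} [Fintype H] [Fintype Ξ] [Nonempty U] {T : ℕ}
    (q : Fin T → Ξ → ℝ) (hq0 : ∀ t ξ, 0 ≤ q t ξ) (hq1 : ∀ t, ∑ ξ, q t ξ = 1)
    (f : Fin T → S → Ξ → U → S)
    (c : Fin T → S → Ξ → U → ℝ) (hc : ∀ t s ξ u, 0 ≤ c t s ξ u)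
    (b : Fin T → Ξ → U → H → ℝ) (C : ℝ) (hb : ∀ t ξ u h, |b t ξ u h| ≤ C)
    (K : S → ℝ) (hK : ∀ s, 0 ≤ K s) (p : Fin T → H → ℝ)
    (W : Fin (T + 1) → S → ℝ) (hWT : ∀ s, W (Fin.last T) s = K s)
    (hW : ∀ (t : Fin T) (s : S), W t.castSucc s = ∑ ξ : Ξ, q t ξ *
      (⨅ a : U, (c t s ξ a + (∑ h, p t h * b t ξ a h) + W t.succ (f t s ξ a))))
    (t : Fin (T + 1)) : ∃ L : ℝ, ∀ s, L ≤ W t s := by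
  induction t using Fin.reverseInduction with
  | last => exact ⟨0, fun s => by rw [hWT]; exact hK s⟩
  | cast t ih =>
    obtain ⟨L, hL⟩ := ih
    refine ⟨-(∑ h, |p t h| * C) + L, fun s => ?_⟩
    rw [hW]
    calc -(∑ h, |p t h| * C) + L = ∑ ξ, q t ξ * (-(∑ h, |p t h| * C) + L) := by
          rw [← sum_mul univ (q t), hq1, one_mul]
      _ ≤ _ := by
          refine sum_le_sum fun ξ _ => mul_le_mul_of_nonneg_left (le_ciInf fun a => ?_) (hq0 t ξ)
          linarith [hc t s ξ a, hL (f t s ξ a), neg_sum_abs_mul_le (p t) (b t ξ a) C (hb t ξ a)]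

/-- The transport price objective is bounded below on a bounded flow set. -/
lemma transport_objective_bddBelow {N A H : Type*} [Fintype N] [Fintype A] [Fintype H]
    (M : Matrix N A ℝ) (B : Set (A → H → ℝ)) (C : ℝ) (hB : ∀ r ∈ B, ∀ a h, |r a h| ≤ C)
    (τ : (A → H → ℝ) → ℝ) (hτ : ∀ r, 0 ≤ τ r) (p : N → H → ℝ) :
    BddBelow (Set.range fun r : ↥B => τ r.val - ∑ i, ∑ h, p i h * ∑ a, M i a * r.val a h) := by
  refine ⟨∑ i, -(∑ h, |(-p i h)| * ∑ a, |M i a| * C), ?_⟩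
  rintro _ ⟨r, rfl⟩
  have key : ∑ i, -(∑ h, |(-p i h)| * ∑ a, |M i a| * C)
      ≤ ∑ i, ∑ h, (-p i h) * ∑ a, M i a * r.val a h := by
    refine sum_le_sum fun i _ => ?_
    refine neg_sum_abs_mul_le (fun h => -p i h) (fun h => ∑ a, M i a * r.val a h)
      (∑ a, |M i a| * C) (fun h => ?_)
    refine (abs_sum_le_sum_abs _ _).trans (sum_le_sum fun a _ => ?_)
    rw [abs_mul]
    exact mul_le_mul_of_nonneg_left (hB r.val r.2 a h) (abs_nonneg _)
  simp only [neg_mul (p _ _) (∑ a, _), sum_neg_distrib] at key ⊢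
  linarith [hτ r.val]

lemma EReal_coe_finset_sum {ι : Type*} (s : Finset ι) (g : ι → ℝ) :
    ((∑ i ∈ s, g i : ℝ) : EReal) = ∑ i ∈ s, (g i : EReal) := by
  classical
  induction s using Finset.induction_on with
  | empty => simp
  | insert a s ha ih => rw [sum_insert ha, sum_insert ha, EReal.coe_add, ih]

/-- Proposition 2 of the paper (finitely supported stagewise-independent noise):
for any deterministic price decomposition process `p`, the sum of the nodal
price cost-to-go functions `Vn i` and of the transport price cost-to-go values
`VA` provides a pointwise lower bound, at every stage, for the constrained
global cost-to-go functions `V` (in which the hourly coupling constraint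
`b t i ξ (u i) = (M r) i` is imposed inside each stage's infimum, the infimum
over an empty feasible set being `+∞`). -/
theorem nodal_plus_transport_le_constrained_costToGo
    {N A H : Type*} [Fintype N] [Nonempty N] [Fintype A] [Nonempty A]
    [Fintype H] [Nonempty H]
    (M : Matrix N A ℝ)
    {T : ℕ} {Ξ : Type*} [Fintype Ξ] [Nonempty Ξ]
    (q : Fin T → Ξ → ℝ) (hq0 : ∀ t ξ, 0 ≤ q t ξ) (hq1 : ∀ t, ∑ ξ, q t ξ = 1)
    {S : N → Type*} {U : N → Type*} [∀ i, Nonempty (U i)]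
    (f : ∀ t : Fin T, ∀ i : N, S i → Ξ → U i → S i)
    (c : ∀ t : Fin T, ∀ i : N, S i → Ξ → U i → ℝ)
    (hc : ∀ t i si ξ u, 0 ≤ c t i si ξ u)
    (b : ∀ t : Fin T, ∀ i : N, Ξ → U i → H → ℝ)
    (hb : ∃ C : ℝ, ∀ t i ξ u h, |b t i ξ u h| ≤ C)
    (K : ∀ i : N, S i → ℝ) (hK : ∀ i si, 0 ≤ K i si)
    (B : Set (A → H → ℝ)) (hBne : B.Nonempty)
    (hBbd : ∃ C : ℝ, ∀ r ∈ B, ∀ a h, |r a h| ≤ C)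
    (τ : Fin T → (A → H → ℝ) → ℝ) (hτ : ∀ t r, 0 ≤ τ t r)
    (p : Fin T → N → H → ℝ)
    -- the constrained global cost-to-go recursion, with values in the extended reals
    (V : Fin (T + 1) → (∀ i, S i) → EReal)
    (hVT : ∀ s, V (Fin.last T) s = ((∑ i, K i (s i) : ℝ) : EReal))
    (hV : ∀ (t : Fin T) (s : ∀ i, S i),
      V t.castSucc s = ∑ ξ : Ξ, ((q t ξ : ℝ) : EReal) *
        (⨅ ur : {ur : (∀ i, U i) × ↥B //
            ∀ i h, b t i ξ (ur.1 i) h = ∑ a, M i a * ur.2.val a h},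
          ((((∑ i, c t i (s i) ξ (ur.val.1 i)) + τ t ur.val.2.val : ℝ) : EReal)
            + V t.succ (fun i => f t i (s i) ξ (ur.val.1 i)))))
    -- the nodal price cost-to-go recursions
    (Vn : ∀ i : N, Fin (T + 1) → S i → ℝ)
    (hVnT : ∀ i si, Vn i (Fin.last T) si = K i si)
    (hVn : ∀ (i : N) (t : Fin T) (si : S i),
      Vn i t.castSucc si = ∑ ξ : Ξ, q t ξ *
        (⨅ a : U i, (c t i si ξ a + (∑ h, p t i h * b t i ξ a h)
          + Vn i t.succ (f t i si ξ a))))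
    -- the transport price cost-to-go values
    (VA : Fin (T + 1) → ℝ)
    (hVAT : VA (Fin.last T) = 0)
    (hVA : ∀ t : Fin T,
      VA t.castSucc =
        (⨅ r : ↥B, (τ t r.val - ∑ i, ∑ h, p t i h * ∑ a, M i a * r.val a h))
          + VA t.succ) :
    ∀ (t : Fin (T + 1)) (s : ∀ i, S i),
      (((∑ i, Vn i t (s i)) + VA t : ℝ) : EReal) ≤ V t s := by
  obtain ⟨Cb, hCb⟩ := hb
  obtain ⟨CB, hCB⟩ := hBbd
  intro t
  induction t using Fin.reverseInduction with
  | last =>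
    intro s
    rw [hVT, hVAT, add_zero]
    simp only [hVnT]
    exact le_rfl
  | cast t ih =>
    intro s
    set φ : Ξ → ℝ := fun ξ => (∑ i, ⨅ a : U i, (c t i (s i) ξ a + (∑ h, p t i h * b t i ξ a h)
      + Vn i t.succ (f t i (s i) ξ a))) +
      ((⨅ r : ↥B, (τ t r.val - ∑ i, ∑ h, p t i h * ∑ a, M i a * r.val a h)) + VA t.succ) with hφ
    -- The weights sum to one, so the deterministic transport value can be averaged as well.
    have hsum : (∑ i, Vn i t.castSucc (s i)) + VA t.castSucc = ∑ ξ, q t ξ * φ ξ := by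
      simp only [hφ, mul_add, sum_add_distrib, ← sum_mul, hq1, one_mul, hVA, mul_sum]
      rw [sum_comm]
      simp only [hVn]
    rw [hsum, hV, EReal_coe_finset_sum]
    refine sum_le_sum fun ξ _ => ?_
    rw [EReal.coe_mul]
    refine mul_le_mul_of_nonneg_left (le_iInf ?_) (EReal.coe_nonneg.mpr (hq0 t ξ))
    rintro ⟨⟨u, r⟩, hur⟩
    refine le_trans ?_ (add_le_add_right (ih fun i => f t i (s i) ξ (u i)) _)
    rw [← EReal.coe_add, EReal.coe_le_coe_iff]
    have hnode : ∀ i, (⨅ a : U i, (c t i (s i) ξ a + (∑ h, p t i h * b t i ξ a h)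
        + Vn i t.succ (f t i (s i) ξ a)))
        ≤ c t i (s i) ξ (u i) + (∑ h, p t i h * b t i ξ (u i) h)
          + Vn i t.succ (f t i (s i) ξ (u i)) := by
      intro i
      obtain ⟨L, hL⟩ := nodal_values_bddBelow q hq0 hq1 (fun t => f t i) (fun t => c t i)
        (fun t => hc t i) (fun t => b t i) Cb (fun t => hCb t i) (K i) (hK i) (fun t => p t i)
        (Vn i) (hVnT i) (hVn i) t.succ
      refine ciInf_le ⟨-(∑ h, |p t i h| * Cb) + L, ?_⟩ (u i)
      rintro _ ⟨a, rfl⟩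
      have h1 := neg_sum_abs_mul_le (p t i) (b t i ξ a) Cb (hCb t i ξ a)
      have h2 := hc t i (s i) ξ a
      have h3 := hL (f t i (s i) ξ a)
      simp only
      linarith
    have htrans := ciInf_le
      (transport_objective_bddBelow M B CB hCB (τ t) (hτ t) (p t)) r
    have hnodes := sum_le_sum fun i (_ : i ∈ univ) => hnode i
    -- By the coupling constraint, the nodal and transport price terms agree.
    have hcancel : ∑ i, ∑ h, p t i h * b t i ξ (u i) h
        = ∑ i, ∑ h, p t i h * ∑ a, M i a * r.val a h :=
      sum_congr rfl fun i _ => sum_congr rfl fun h _ => by rw [hur i h]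
    simp only [sum_add_distrib] at hnodes
    simp only [hφ]
    linarith
end
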